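/- Deleting all boxes from all theorems of CC yields an inconsistency: CC proves the existence of a concept R satisfying both ¬¬(R ∈ R) and R ∈ R → □⊥, and erasing the box in the second formula produces, together with the first, the contradictory pair ¬¬(R ∈ R) and ¬(R ∈ R). Formally, the set of box-erasures of theorems of CC is inconsistent over intuitionistic predicate calculus with equality. -/

import Mathlib

/-!
Deep embedding of Weaver's system CC ("Constructive Concepts").

The language is the first-order language of set theory (∈ and =, variables
only as terms) augmented by a unary operator □.  Formulas use de Bruijn
indices for variables.  ⊥ is the defined formula (∀x,y)(x ∈ y) and ¬A
abbreviates A → ⊥.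

CC consists of intuitionistic predicate calculus with equality (presented
in natural-deduction style, with contexts), the modal axiom schemes
(1) A → □A, (2) □(A∧B) ↔ (□A ∧ □B), (3) □(A∨B) ↔ (□A ∨ □B),
(4) □∃xA ↔ ∃x□A, (5) □∀xA ↔ ∀x□A, (6) □(A→B) → (□A → □B),
the deduction rule inferring A from □A (applicable to theorems, i.e. in
the empty context), the extensionality axiom (7), and the comprehension
scheme (8) (∃x)(∀r)(r ∈ x ↔ □A) with x not free in A.
-/

namespace CC

/-- Formulas of CC; variables are de Bruijn indices. -/
inductive Fm : Type
  | mem : ℕ → ℕ → Fm        -- x ∈ y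
  | eq  : ℕ → ℕ → Fm        -- x = y
  | and : Fm → Fm → Fm
  | or  : Fm → Fm → Fm
  | imp : Fm → Fm → Fm
  | all : Fm → Fm
  | ex  : Fm → Fm
  | box : Fm → Fm
  deriving DecidableEq

namespace Fm

/-- ⊥ stands for (∀x,y)(x ∈ y). -/
def bot : Fm := .all (.all (.mem 1 0))

/-- ¬A abbreviates A → ⊥. -/
def neg (A : Fm) : Fm := A.imp bot

/-- A ↔ B abbreviates (A → B) ∧ (B → A). -/
def iff (A B : Fm) : Fm := (A.imp B).and (B.imp A)

/-- Lift a variable: indices ≥ d are incremented. -/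
def liftVar (d n : ℕ) : ℕ := if n < d then n else n + 1

/-- Lift a formula at depth d: free indices ≥ d are incremented. -/
def liftAt (d : ℕ) : Fm → Fm
  | mem a b => mem (liftVar d a) (liftVar d b)
  | eq a b  => eq (liftVar d a) (liftVar d b)
  | and A B => and (A.liftAt d) (B.liftAt d)
  | or A B  => or (A.liftAt d) (B.liftAt d)
  | imp A B => imp (A.liftAt d) (B.liftAt d)
  | all A   => all (A.liftAt (d+1))
  | ex A    => ex (A.liftAt (d+1))
  | box A   => box (A.liftAt d)

/-- Lift a formula (all free indices incremented). -/
def shift : Fm → Fm := liftAt 0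

/-- Substitute variable t for index d (indices above d are lowered). -/
def substVar (d t n : ℕ) : ℕ := if n < d then n else if n = d then t else n - 1

/-- Substitute the variable t for the de Bruijn index d. -/
def subst (d t : ℕ) : Fm → Fm
  | mem a b => mem (substVar d t a) (substVar d t b)
  | eq a b  => eq (substVar d t a) (substVar d t b)
  | and A B => and (A.subst d t) (B.subst d t)
  | or A B  => or (A.subst d t) (B.subst d t)
  | imp A B => imp (A.subst d t) (B.subst d t)
  | all A   => all (A.subst (d+1) (t+1))
  | ex A    => ex (A.subst (d+1) (t+1))
  | box A   => box (A.subst d t)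

end Fm

/-- The extensionality axiom (7): x = y ↔ (∀u)(u ∈ x ↔ u ∈ y)
(universally closed). -/
def extAx : Fm :=
  .all (.all (Fm.iff (.eq 1 0) (.all (Fm.iff (.mem 0 2) (.mem 0 1)))))

/-- Derivability in CC, from a list of hypotheses.  The rules are those of
intuitionistic natural deduction with equality (with ex falso for the
defined ⊥), the modal axioms (1)–(6), the rule inferring A from □A (for
theorems, i.e. with no hypotheses), extensionality, and comprehension.
In `compr`, the formula `A` has de Bruijn index 0 as the fixed variable r;
lifting at 1 guarantees that the comprehension variable x does not occur
freely in A. -/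
inductive Prf : List Fm → Fm → Prop
  | hyp {Γ : List Fm} {A : Fm} : A ∈ Γ → Prf Γ A
  | andI {Γ : List Fm} {A B : Fm} : Prf Γ A → Prf Γ B → Prf Γ (.and A B)
  | andE1 {Γ : List Fm} {A B : Fm} : Prf Γ (.and A B) → Prf Γ A
  | andE2 {Γ : List Fm} {A B : Fm} : Prf Γ (.and A B) → Prf Γ B
  | orI1 {Γ : List Fm} {A B : Fm} : Prf Γ A → Prf Γ (.or A B)
  | orI2 {Γ : List Fm} {A B : Fm} : Prf Γ B → Prf Γ (.or A B)
  | orE {Γ : List Fm} {A B C : Fm} : Prf Γ (.or A B) → Prf (A :: Γ) C → Prf (B :: Γ) C → Prf Γ C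
  | impI {Γ : List Fm} {A B : Fm} : Prf (A :: Γ) B → Prf Γ (.imp A B)
  | impE {Γ : List Fm} {A B : Fm} : Prf Γ (.imp A B) → Prf Γ A → Prf Γ B
  | exfalso {Γ : List Fm} {A : Fm} : Prf Γ Fm.bot → Prf Γ A
  | allI {Γ : List Fm} {A : Fm} : Prf (Γ.map Fm.shift) A → Prf Γ (.all A)
  | allE {Γ : List Fm} {A : Fm} (t : ℕ) : Prf Γ (.all A) → Prf Γ (A.subst 0 t)
  | exI {Γ : List Fm} {A : Fm} (t : ℕ) : Prf Γ (A.subst 0 t) → Prf Γ (.ex A)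
  | exE {Γ : List Fm} {A B : Fm} : Prf Γ (.ex A) → Prf (A :: Γ.map Fm.shift) B.shift → Prf Γ B
  | refl {Γ : List Fm} (t : ℕ) : Prf Γ (.eq t t)
  | eqSubst {Γ : List Fm} {A : Fm} (s t : ℕ) :
      Prf Γ (.eq s t) → Prf Γ (A.subst 0 s) → Prf Γ (A.subst 0 t)
  | ax1 {Γ : List Fm} {A : Fm} : Prf Γ (A.imp (.box A))
  | ax2 {Γ : List Fm} {A B : Fm} : Prf Γ (Fm.iff (.box (.and A B)) (.and (.box A) (.box B)))
  | ax3 {Γ : List Fm} {A B : Fm} : Prf Γ (Fm.iff (.box (.or A B)) (.or (.box A) (.box B)))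
  | ax4 {Γ : List Fm} {A : Fm} : Prf Γ (Fm.iff (.box (.ex A)) (.ex (.box A)))
  | ax5 {Γ : List Fm} {A : Fm} : Prf Γ (Fm.iff (.box (.all A)) (.all (.box A)))
  | ax6 {Γ : List Fm} {A B : Fm} : Prf Γ ((Fm.box (A.imp B)).imp ((Fm.box A).imp (.box B)))
  | boxE {A : Fm} : Prf [] (.box A) → Prf [] A
  | ext {Γ : List Fm} : Prf Γ extAx
  | compr {Γ : List Fm} (A : Fm) :
      Prf Γ (.ex (.all (Fm.iff (.mem 0 1) (.box (A.liftAt 1)))))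


/-- Box-erasure: delete all occurrences of the operator □. -/
def Fm.erase : Fm → Fm
  | .mem a b => .mem a b
  | .eq a b  => .eq a b
  | .and A B => .and A.erase B.erase
  | .or A B  => .or A.erase B.erase
  | .imp A B => .imp A.erase B.erase
  | .all A   => .all A.erase
  | .ex A    => .ex A.erase
  | .box A   => A.erase

/-- Formulas of the language of CC minus the box operator. -/
inductive BoxFree : Fm → Prop
  | mem (a b : ℕ) : BoxFree (.mem a b)
  | eq (a b : ℕ) : BoxFree (.eq a b)
  | and {A B : Fm} : BoxFree A → BoxFree B → BoxFree (.and A B)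
  | or {A B : Fm} : BoxFree A → BoxFree B → BoxFree (.or A B)
  | imp {A B : Fm} : BoxFree A → BoxFree B → BoxFree (.imp A B)
  | all {A : Fm} : BoxFree A → BoxFree (.all A)
  | ex {A : Fm} : BoxFree A → BoxFree (.ex A)

/-- Derivability in pure intuitionistic predicate calculus with equality
(the logic of CC without the modal rules and without the set-theoretic
axioms of CC). -/
inductive PrfI : List Fm → Fm → Prop
  | hyp {Γ : List Fm} {A : Fm} : A ∈ Γ → PrfI Γ A
  | andI {Γ : List Fm} {A B : Fm} : PrfI Γ A → PrfI Γ B → PrfI Γ (.and A B)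
  | andE1 {Γ : List Fm} {A B : Fm} : PrfI Γ (.and A B) → PrfI Γ A
  | andE2 {Γ : List Fm} {A B : Fm} : PrfI Γ (.and A B) → PrfI Γ B
  | orI1 {Γ : List Fm} {A B : Fm} : PrfI Γ A → PrfI Γ (.or A B)
  | orI2 {Γ : List Fm} {A B : Fm} : PrfI Γ B → PrfI Γ (.or A B)
  | orE {Γ : List Fm} {A B C : Fm} :
      PrfI Γ (.or A B) → PrfI (A :: Γ) C → PrfI (B :: Γ) C → PrfI Γ C
  | impI {Γ : List Fm} {A B : Fm} : PrfI (A :: Γ) B → PrfI Γ (.imp A B)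
  | impE {Γ : List Fm} {A B : Fm} : PrfI Γ (.imp A B) → PrfI Γ A → PrfI Γ B
  | exfalso {Γ : List Fm} {A : Fm} : PrfI Γ Fm.bot → PrfI Γ A
  | allI {Γ : List Fm} {A : Fm} : PrfI (Γ.map Fm.shift) A → PrfI Γ (.all A)
  | allE {Γ : List Fm} {A : Fm} (t : ℕ) : PrfI Γ (.all A) → PrfI Γ (A.subst 0 t)
  | exI {Γ : List Fm} {A : Fm} (t : ℕ) : PrfI Γ (A.subst 0 t) → PrfI Γ (.ex A)
  | exE {Γ : List Fm} {A B : Fm} :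
      PrfI Γ (.ex A) → PrfI (A :: Γ.map Fm.shift) B.shift → PrfI Γ B
  | refl {Γ : List Fm} (t : ℕ) : PrfI Γ (.eq t t)
  | eqSubst {Γ : List Fm} {A : Fm} (s t : ℕ) :
      PrfI Γ (.eq s t) → PrfI Γ (A.subst 0 s) → PrfI Γ (A.subst 0 t)

/-- The box-erased comprehension instance for `¬ (r ∈ r)`, with the comprehension variable as
index `0`: `(∀r)(r ∈ x ↔ ¬ (r ∈ r))`. -/
def russellFm : Fm :=
  .all (Fm.iff (.mem 0 1) (Fm.neg (.mem 0 0)))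

/-- Instantiating `russellFm` at the Russell concept itself. -/
theorem PrfI.russell_iff {Γ : List Fm} (h : russellFm ∈ Γ) :
    PrfI Γ (Fm.iff (.mem 0 0) (Fm.neg (.mem 0 0))) :=
  PrfI.allE (A := Fm.iff (.mem 0 1) (Fm.neg (.mem 0 0))) 0 (.hyp h)

theorem PrfI.russell_not_mem {Γ : List Fm} (h : russellFm ∈ Γ) :
    PrfI Γ (Fm.neg (.mem 0 0)) :=
  .impI (.impE (.impE (.andE1 (russell_iff (List.mem_cons_of_mem _ h))) (.hyp List.mem_cons_self))
    (.hyp List.mem_cons_self))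

/-- Russell's paradox in intuitionistic predicate calculus. -/
theorem PrfI.russell_bot {Γ : List Fm} (h : russellFm ∈ Γ) : PrfI Γ Fm.bot :=
  .impE (russell_not_mem h) (.impE (.andE2 (russell_iff h)) (russell_not_mem h))

/-- Deleting all boxes from all theorems of CC yields an
inconsistency: the set of box-erasures of theorems of CC is inconsistent
over intuitionistic predicate calculus with equality, i.e. some finite list
of box-erasures of theorems of CC derives ⊥ in that calculus.  (Indeed CC
proves ∃R with ¬¬(R ∈ R) and R ∈ R → □⊥; erasing boxes gives the
contradictory pair ¬¬(R ∈ R) and ¬(R ∈ R).) -/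
theorem box_erasure_of_CC_inconsistent :
    ∃ Γ : List Fm, (∀ B ∈ Γ, ∃ A : Fm, Prf [] A ∧ A.erase = B) ∧
      PrfI Γ Fm.bot := by
  refine ⟨[.ex russellFm], ?_, .exE (.hyp List.mem_cons_self) (.russell_bot List.mem_cons_self)⟩
  intro B hB
  obtain rfl := List.mem_singleton.mp hB
  exact ⟨_, Prf.compr (Fm.neg (.mem 0 0)), rfl⟩

end CC
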